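/- For b, c, p ∈ ℂ with k = p + (b+2)/2 ∉ {0, −1, −2, …}, the entire function w(z) = N_{p,b,c}(z) = ∑_{n=0}^∞ (−c/4)^n z^n / ((3/2)_n (k)_n) satisfies the differential equation 4z²w″(z) + 2(2p+b+3)z·w′(z) + (cz + 2p + b)·w(z) = 2p + b for all z ∈ ℂ. -/

import Mathlib

open Complex Set

noncomputable section

/-- The open unit disk in ℂ. -/
def unitDisk : Set ℂ := Metric.ball 0 1

/-- Pochhammer symbol `(x)_n = x (x+1) ⋯ (x+n-1)`. -/
def poch (x : ℂ) (n : ℕ) : ℂ := ∏ i ∈ Finset.range n, (x + i)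

/-- `k` is not a nonpositive integer `0, -1, -2, …`. -/
def NotNonposInt (k : ℂ) : Prop := ∀ n : ℕ, k ≠ -(n : ℂ)

/-- `a` is the coefficient sequence of a function `f(z) = z + ∑_{n≥2} a_n z^n`
in the class `A` of normalized analytic functions on the unit disk. -/
def InA (a : ℕ → ℂ) : Prop :=
  a 0 = 0 ∧ a 1 = 1 ∧ ∀ z ∈ unitDisk, Summable fun n => a n * z ^ n

/-- The generalized Struve convolution operator `S_k^c` applied to
`f(z) = z + ∑_{n≥2} a_n z^n`, namely
`S_k^c f(z) = z + ∑_{n≥1} (-c/4)^n a_{n+1} z^{n+1} / ((3/2)_n (k)_n)`. -/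
def struveOp (k c : ℂ) (a : ℕ → ℂ) (z : ℂ) : ℂ :=
  z + ∑' n : ℕ,
    (-c / 4) ^ (n + 1) / (poch (3 / 2) (n + 1) * poch k (n + 1)) * a (n + 2) * z ^ (n + 2)

/-- Subordination of analytic functions on the unit disk. -/
def Subord (f g : ℂ → ℂ) : Prop :=
  ∃ w : ℂ → ℂ, AnalyticOnNhd ℂ w unitDisk ∧ w 0 = 0 ∧ (∀ z ∈ unitDisk, ‖w z‖ < 1) ∧
    ∀ z ∈ unitDisk, f z = g (w z)

/-- `(z / F z) ^ μ` (principal branch), with the removable singularity at `z = 0`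
filled in with the value `1`. -/
def ratioPow (μ : ℝ) (F : ℂ → ℂ) (z : ℂ) : ℂ :=
  (if z = 0 then 1 else z / F z) ^ (μ : ℂ)

/-- `F z / G z`, with the removable singularity at `z = 0` filled in with value `1`. -/
def ratioQ (F G : ℂ → ℂ) (z : ℂ) : ℂ := if z = 0 then 1 else F z / G z

/-- The expression
`e^{iα} {(1+λ)(z/S_{k+1}f)^μ − λ (S_k f/S_{k+1} f)(z/S_{k+1} f)^μ}`. -/
def Jfun (α : ℝ) (lam : ℂ) (μ : ℝ) (Sk Sk1 : ℂ → ℂ) (z : ℂ) : ℂ :=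
  exp (α * I) * ((1 + lam) * ratioPow μ Sk1 z - lam * ratioQ Sk Sk1 z * ratioPow μ Sk1 z)

/-- Membership `f ∈ N_{k,c}^α(λ, μ, φ)` for `f(z) = z + ∑_{n≥2} a_n z^n`. -/
def memN (α : ℝ) (lam : ℂ) (μ : ℝ) (k c : ℂ) (φ : ℂ → ℂ) (a : ℕ → ℂ) : Prop :=
  Subord (Jfun α lam μ (struveOp k c a) (struveOp (k + 1) c a))
    (fun z => (Real.cos α : ℂ) * φ z + (Real.sin α : ℂ) * I)

/-- `φ` is convex univalent on the unit disk. -/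
def ConvexUnivalent (φ : ℂ → ℂ) : Prop :=
  AnalyticOnNhd ℂ φ unitDisk ∧ InjOn φ unitDisk ∧ Convex ℝ (φ '' unitDisk)

/-- `F z / z` is nonvanishing on the unit disk. -/
def Nonvan (F : ℂ → ℂ) : Prop := ∀ z ∈ unitDisk, z ≠ 0 → F z ≠ 0

/-- The Gaussian hypergeometric function `₂F₁(a,b,c;z)` (as a series). -/
def hyp2F1 (a b c z : ℂ) : ℂ :=
  ∑' n : ℕ, poch a n * poch b n / (poch c n * (n.factorial : ℂ)) * z ^ n
/-- The normalized generalized Struve function `N_{p,b,c}`. -/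
def NStruve (k c : ℂ) (z : ℂ) : ℂ :=
  ∑' n : ℕ, (-c / 4) ^ n / (poch (3 / 2) n * poch k n) * z ^ n

/-!
Write `θ = z d/dz` and `w = ∑ aₙ zⁿ`. Since `2p + b = 2(k - 1)`, the left-hand side without the
term `c z w` is `(2θ + 1)(2θ + 2(k - 1)) w`, with `n`-th coefficient `4 (n + 1/2) (n + k - 1) aₙ`.
The recursion of the Pochhammer symbols turns the coefficient at `n + 1` into `-c aₙ`, so this
series is `2(k - 1) - c z w`.
-/

open Filter Topology FormalMultilinearSeries

theorem tendsto_inv_add_natCast {K : Type*} [NormedField K] [NormSMulClass ℤ K] (x : K) :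
    Tendsto (fun n : ℕ ↦ (x + n)⁻¹) atTop (𝓝 0) :=
  tendsto_inv₀_cobounded.comp
    ((tendsto_const_add_cobounded x).comp tendsto_natCast_atTop_cobounded)

section PowerSeries

variable {𝕜 : Type*} [NontriviallyNormedField 𝕜]

theorem ofScalars_radius_eq_top_of_succ_eq_mul (E : Type*) [NormedRing E] [NormOneClass E]
    [NormedAlgebra 𝕜 E] {a ρ : ℕ → 𝕜} (ha : ∀ n, a (n + 1) = ρ n * a n)
    (hρ : Tendsto ρ atTop (𝓝 0)) : (ofScalars E a).radius = ⊤ := by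
  refine radius_eq_top_of_summable_norm _ fun r ↦ ?_
  have ratio_tendsto : Tendsto (fun n ↦ ‖ρ n‖ * (r : ℝ)) atTop (𝓝 0) := by
    simpa using hρ.norm.mul_const (r : ℝ)
  refine summable_of_ratio_norm_eventually_le one_half_lt_one ?_
  filter_upwards [ratio_tendsto.eventually_le_const one_half_pos] with n hn
  calc ‖‖ofScalars E a (n + 1)‖ * (r : ℝ) ^ (n + 1)‖
      = ‖ρ n‖ * r * ‖‖ofScalars E a n‖ * (r : ℝ) ^ n‖ := by
        simp only [ofScalars_norm, ha, norm_mul, norm_norm, norm_pow, NNReal.norm_eq]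
        ring
    _ ≤ 1 / 2 * ‖‖ofScalars E a n‖ * (r : ℝ) ^ n‖ := by gcongr

variable {F : Type*} [NormedAddCommGroup F] [NormedSpace 𝕜 F] [CompleteSpace F] {f : 𝕜 → F}
  {p : FormalMultilinearSeries 𝕜 𝕜 F} {x : 𝕜} {r : ENNReal}

theorem hasFPowerSeriesOnBall_deriv (hf : HasFPowerSeriesOnBall f p x r) :
    HasFPowerSeriesOnBall (deriv f)
      ((ContinuousLinearMap.apply 𝕜 F (1 : 𝕜)).compFormalMultilinearSeries p.derivSeries) x r :=
  (ContinuousLinearMap.apply 𝕜 F (1 : 𝕜)).comp_hasFPowerSeriesOnBall hf.fderiv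

theorem hasSum_descFactorial_smul_coeff (hf : HasFPowerSeriesOnBall f p x r) (m : ℕ) {y : 𝕜}
    (hy : y ∈ Metric.eball 0 r) :
    HasSum (fun n ↦ n.descFactorial m • y ^ n • p.coeff n) (y ^ m • iteratedDeriv m f (x + y)) := by
  induction m generalizing f p with
  | zero => simpa using hf.hasSum hy
  | succ m ih =>
    have tail : HasSum (fun n ↦ (n + 1).descFactorial (m + 1) • y ^ (n + 1) • p.coeff (n + 1))
        (y ^ (m + 1) • iteratedDeriv (m + 1) f (x + y)) := by
      rw [iteratedDeriv_succ', pow_succ', mul_smul]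
      refine ((ih (hasFPowerSeriesOnBall_deriv hf)).const_smul y).congr_fun fun n ↦ ?_
      have coeff_eq : ((ContinuousLinearMap.apply 𝕜 F (1 : 𝕜)).compFormalMultilinearSeries
          p.derivSeries).coeff n = (n + 1) • p.coeff (n + 1) := p.derivSeries_coeff_one n
      rw [coeff_eq, Nat.succ_descFactorial_succ]
      module
    simpa using HasSum.zero_add (f := fun n ↦ n.descFactorial (m + 1) • y ^ n • p.coeff n) tail

end PowerSeries

section StruveCoefficients

theorem poch_succ (x : ℂ) (n : ℕ) : poch x (n + 1) = poch x n * (x + n) :=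
  Finset.prod_range_succ _ n

theorem NotNonposInt.add_natCast_ne_zero {x : ℂ} (hx : NotNonposInt x) (n : ℕ) : x + n ≠ 0 :=
  fun h ↦ hx n (eq_neg_of_add_eq_zero_left h)

theorem notNonposInt_three_halves : NotNonposInt (3 / 2) := by
  intro n h
  have re_eq : (3 / 2 : ℝ) = -n := by simpa using congrArg re h
  linarith [n.cast_nonneg (α := ℝ)]

/-- The Taylor coefficients at `0` of the normalized generalized Struve function, as a sequence, so
that the library's theory of scalar power series (`ofScalars`) applies to `NStruve`. -/
def struveCoeff (k c : ℂ) (n : ℕ) : ℂ := (-c / 4) ^ n / (poch (3 / 2) n * poch k n)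

/-- The indicial polynomial at `0` of the Struve equation: its differential operator without the
term `c z w` multiplies `z ^ s` by `struveIndicial k s`. -/
def struveIndicial (k s : ℂ) : ℂ := (2 * s + 1) * (2 * s + 2 * (k - 1))

variable {k c : ℂ}

theorem struveCoeff_zero : struveCoeff k c 0 = 1 := by simp [struveCoeff, poch]

theorem struveCoeff_succ (n : ℕ) :
    struveCoeff k c (n + 1) = -c / 4 / ((3 / 2 + n) * (k + n)) * struveCoeff k c n := by
  simp only [struveCoeff, poch_succ, pow_succ', div_mul_div_comm]
  ring

theorem struveIndicial_succ_mul_struveCoeff_succ (hk : NotNonposInt k) (n : ℕ) :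
    struveIndicial k (n + 1) * struveCoeff k c (n + 1) = -c * struveCoeff k c n := by
  have denom_ne_zero : (3 / 2 + n) * (k + n) ≠ 0 :=
    mul_ne_zero (notNonposInt_three_halves.add_natCast_ne_zero n) (hk.add_natCast_ne_zero n)
  calc struveIndicial k (n + 1) * struveCoeff k c (n + 1)
      = 4 * ((3 / 2 + n) * (k + n) * (-c / 4 / ((3 / 2 + n) * (k + n)))) * struveCoeff k c n := by
        rw [struveCoeff_succ, struveIndicial]
        ring
    _ = -c * struveCoeff k c n := by
        rw [mul_div_cancel₀ _ denom_ne_zero]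
        ring

theorem tendsto_struveCoeff_ratio (k c : ℂ) :
    Tendsto (fun n : ℕ ↦ -c / 4 / ((3 / 2 + n) * (k + n))) atTop (𝓝 0) := by
  have tendsto_inv_mul_inv : Tendsto (fun n : ℕ ↦ -c / 4 * ((3 / 2 + n : ℂ)⁻¹ * (k + n)⁻¹)) atTop
      (𝓝 (-c / 4 * (0 * 0))) :=
    ((tendsto_inv_add_natCast (3 / 2)).mul (tendsto_inv_add_natCast k)).const_mul (-c / 4)
  simpa only [mul_zero, div_eq_mul_inv, mul_inv] using tendsto_inv_mul_inv

theorem hasFPowerSeriesOnBall_nStruve (k c : ℂ) :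
    HasFPowerSeriesOnBall (NStruve k c) (ofScalars ℂ (struveCoeff k c)) 0 ⊤ := by
  have radius_eq_top : (ofScalars ℂ (struveCoeff k c)).radius = ⊤ :=
    ofScalars_radius_eq_top_of_succ_eq_mul ℂ struveCoeff_succ (tendsto_struveCoeff_ratio k c)
  have sum_eq : (ofScalars ℂ (struveCoeff k c)).sum = NStruve k c :=
    ofScalarsSum_eq_tsum _
  have hasSeries := (ofScalars ℂ (struveCoeff k c)).hasFPowerSeriesOnBall (by simp [radius_eq_top])
  rwa [sum_eq, radius_eq_top] at hasSeries

end StruveCoefficients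

theorem hasSum_descFactorial_mul_struveCoeff (k c z : ℂ) (m : ℕ) :
    HasSum (fun n ↦ n.descFactorial m * (struveCoeff k c n * z ^ n))
      (z ^ m * iteratedDeriv m (NStruve k c) z) := by
  simpa [mul_comm (z ^ _) (struveCoeff _ _ _)] using
    hasSum_descFactorial_smul_coeff (hasFPowerSeriesOnBall_nStruve k c) m (y := z) (by simp)

theorem hasSum_struveIndicial_mul_struveCoeff_deriv (k c z : ℂ) :
    HasSum (fun n : ℕ ↦ struveIndicial k n * (struveCoeff k c n * z ^ n))
      (4 * (z ^ 2 * iteratedDeriv 2 (NStruve k c) z)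
        + 2 * (2 * k + 1) * (z * deriv (NStruve k c) z) + 2 * (k - 1) * NStruve k c z) := by
  have h0 := hasSum_descFactorial_mul_struveCoeff k c z 0
  have h1 := hasSum_descFactorial_mul_struveCoeff k c z 1
  have h2 := hasSum_descFactorial_mul_struveCoeff k c z 2
  simp only [Nat.descFactorial_zero, Nat.descFactorial_one, Nat.cast_descFactorial_two,
    iteratedDeriv_zero, iteratedDeriv_one, pow_zero, pow_one, Nat.cast_one, one_mul] at h0 h1 h2
  refine (((h2.mul_left 4).add (h1.mul_left (2 * (2 * k + 1)))).add
    (h0.mul_left (2 * (k - 1)))).congr_fun fun n ↦ ?_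
  rw [struveIndicial]
  ring

theorem hasSum_struveIndicial_mul_struveCoeff_sub {k : ℂ} (hk : NotNonposInt k) (c z : ℂ) :
    HasSum (fun n : ℕ ↦ struveIndicial k n * (struveCoeff k c n * z ^ n))
      (2 * (k - 1) - c * z * NStruve k c z) := by
  have series : HasSum (fun n ↦ struveCoeff k c n * z ^ n) (NStruve k c z) := by
    simpa using hasSum_descFactorial_mul_struveCoeff k c z 0
  have tail : HasSum (fun n : ℕ ↦ struveIndicial k (n + 1 : ℕ) *
      (struveCoeff k c (n + 1) * z ^ (n + 1))) (-(c * z) * NStruve k c z) := by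
    refine (series.mul_left (-(c * z))).congr_fun fun n ↦ ?_
    push_cast
    linear_combination z ^ (n + 1) * struveIndicial_succ_mul_struveCoeff_succ (c := c) hk n
  have head : struveIndicial k (0 : ℕ) * (struveCoeff k c 0 * z ^ 0) = 2 * (k - 1) := by
    simp [struveIndicial, struveCoeff_zero]
  have total := HasSum.zero_add
    (f := fun n : ℕ ↦ struveIndicial k n * (struveCoeff k c n * z ^ n)) tail
  rwa [head, neg_mul, ← sub_eq_add_neg] at total

/-- `w = N_{p,b,c}` satisfies
`4z²w'' + 2(2p+b+3)z w' + (cz+2p+b) w = 2p+b` on all of ℂ. -/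
theorem struve_ode (p b c k : ℂ) (hk : k = p + (b + 2) / 2) (hknp : NotNonposInt k) :
    ∀ z : ℂ,
      4 * z ^ 2 * iteratedDeriv 2 (NStruve k c) z
          + 2 * (2 * p + b + 3) * z * deriv (NStruve k c) z
          + (c * z + 2 * p + b) * NStruve k c z
        = 2 * p + b := by
  intro z
  have two_mul_p_add_b : 2 * p + b = 2 * (k - 1) := by rw [hk]; ring
  have ode := (hasSum_struveIndicial_mul_struveCoeff_deriv k c z).unique
    (hasSum_struveIndicial_mul_struveCoeff_sub hknp c z)
  linear_combination ode + (2 * z * deriv (NStruve k c) z + NStruve k c z - 1) * two_mul_p_add_b
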